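/- arXiv:2206.06232 — 3 statements merged into one kernel-verified Lean document; each statement's English description precedes it below -/
import Mathlib

section
/- Assume each ℓ_i is differentiable with β-Lipschitz gradient (individual β-smoothness, β > 0), L is bounded below with infimum L*, and (A1) holds with constant σ ≥ 0. Fix a batch size b ≥ 1, a horizon T ≥ 256, and step sizes γ = 1/(√T·β), ρ = 1/(T^{1/4}·β). From any w_0, define for each batch sequence (J_0,…,J_{T−1}) the stochastic m-SAM iterates w_{t+1} = w_t − γ∇L_{J_t}(w_t + ρ∇L_{J_t}(w_t)). Then, averaging uniformly over all batch sequences, (1/T)·E[∑_{t=0}^{T−1} ‖∇L(w_t)‖²] ≤ (4β/√T)·(L(w_0) − L*) + 8σ²/(b√T). -/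
open scoped RealInnerProductSpace

/-- The full (training) loss `L(w) = (1/n) ∑ᵢ ℓᵢ(w)`. -/
noncomputable def fullLoss {d n : ℕ} (ℓ : Fin n → EuclideanSpace ℝ (Fin d) → ℝ)
    (w : EuclideanSpace ℝ (Fin d)) : ℝ :=
  (n : ℝ)⁻¹ * ∑ i, ℓ i w

/-- The full gradient `∇L(w) = (1/n) ∑ᵢ ∇ℓᵢ(w)` (given per-example gradients `g i`). -/
noncomputable def fullGrad {d n : ℕ}
    (g : Fin n → EuclideanSpace ℝ (Fin d) → EuclideanSpace ℝ (Fin d))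
    (w : EuclideanSpace ℝ (Fin d)) : EuclideanSpace ℝ (Fin d) :=
  (n : ℝ)⁻¹ • ∑ i, g i w

/-- The mini-batch gradient `∇L_J(w) = (1/b) ∑_{k<b} ∇ℓ_{J k}(w)` for a batch
`J : Fin b → Fin n` (sampling with replacement). -/
noncomputable def batchGrad {d n b : ℕ}
    (g : Fin n → EuclideanSpace ℝ (Fin d) → EuclideanSpace ℝ (Fin d))
    (J : Fin b → Fin n) (w : EuclideanSpace ℝ (Fin d)) : EuclideanSpace ℝ (Fin d) :=
  (b : ℝ)⁻¹ • ∑ k, g (J k) w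

/-!
Write `G` for the mean of the stochastic gradient `v` at `x`, and `u` for the stochastic gradient,
on the same batch, at the perturbed point `x + ρ • v`. Smoothness of the batch loss gives
`‖u - v‖ ≤ βρ ‖v‖`, so the descent lemma and `⟪u, G⟫ ≥ ⟪v, G⟫ - ‖G‖² / 4 - (βρ)² ‖v‖²` reduce a SAM
step to an SGD step with an error `γ ((βρ)² + βγ) ‖v‖²`. This bound is linear in `v` and `‖v‖²`, so
it can be averaged over the batch although `u` is a biased estimate of `G`, and
`𝔼 ‖v‖² ≤ ‖G‖² + σ² / b`. The drift inequality telescopes along the trajectory; with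
`βγ = (βρ)² = 1 / √T` both terms of the resulting bound are of order `1 / √T`.
-/

open Finset Function
open scoped BigOperators InnerProductSpace NNReal

section Expect

variable {ι E : Type*} [NormedAddCommGroup E] [Module ℚ≥0 E]

theorem expect_eq_inv_card_smul_sum [NormedSpace ℝ E] (s : Finset ι) (f : ι → E) :
    𝔼 i ∈ s, f i = (#s : ℝ)⁻¹ • ∑ i ∈ s, f i := by
  rw [expect, ← NNRat.cast_smul_eq_nnqsmul ℝ, NNRat.cast_inv, NNRat.cast_natCast]

theorem expect_inner {𝕜 : Type*} [RCLike 𝕜] [InnerProductSpace 𝕜 E] (s : Finset ι) (f : ι → E)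
    (y : E) : ⟪𝔼 i ∈ s, f i, y⟫_𝕜 = 𝔼 i ∈ s, ⟪f i, y⟫_𝕜 := by
  simp only [expect, ← NNRat.cast_smul_eq_nnqsmul 𝕜, inner_smul_left, sum_inner, smul_eq_mul,
    map_nnratCast]

theorem inner_expect {𝕜 : Type*} [RCLike 𝕜] [InnerProductSpace 𝕜 E] (s : Finset ι) (f : ι → E)
    (y : E) : ⟪y, 𝔼 i ∈ s, f i⟫_𝕜 = 𝔼 i ∈ s, ⟪y, f i⟫_𝕜 := by
  simp only [expect, ← NNRat.cast_smul_eq_nnqsmul 𝕜, inner_smul_right, inner_sum, smul_eq_mul]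

theorem norm_expect_le [NormedSpace ℝ E] (s : Finset ι) (f : ι → E) :
    ‖𝔼 i ∈ s, f i‖ ≤ 𝔼 i ∈ s, ‖f i‖ := by
  simp only [expect_eq_inv_card_smul_sum, norm_smul, norm_inv, RCLike.norm_natCast, smul_eq_mul]
  gcongr
  exact norm_sum_le s f

theorem hasGradientAt_expect [InnerProductSpace ℝ E] [CompleteSpace E] (s : Finset ι)
    {f : ι → E → ℝ} {f' : ι → E} {x : E} (hf : ∀ i ∈ s, HasGradientAt (f i) (f' i) x) :
    HasGradientAt (fun y ↦ 𝔼 i ∈ s, f i y) (𝔼 i ∈ s, f' i) x := by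
  simp only [expect_eq_inv_card_smul_sum, hasGradientAt_iff_hasFDerivAt, map_smul, map_sum]
  exact (HasFDerivAt.fun_sum fun i hi ↦ (hf i hi).hasFDerivAt).const_smul (#s : ℝ)⁻¹

variable [Fintype ι] [Nonempty ι]

theorem expect_norm_sub_expect_sq [InnerProductSpace ℝ E] (f : ι → E) :
    𝔼 i, ‖f i - 𝔼 j, f j‖ ^ 2 = 𝔼 i, ‖f i‖ ^ 2 - ‖𝔼 i, f i‖ ^ 2 := by
  simp only [norm_sub_sq_real, expect_add_distrib, expect_sub_distrib, ← mul_expect,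
    ← expect_inner, real_inner_self_eq_norm_sq, Fintype.expect_const (ι := ι)]
  ring

theorem lipschitzWith_expect [NormedSpace ℝ E] {X : Type*} [PseudoMetricSpace X] {K : ℝ≥0}
    {f : ι → X → E} (hf : ∀ i, LipschitzWith K (f i)) :
    LipschitzWith K fun x ↦ 𝔼 i, f i x := by
  refine LipschitzWith.of_dist_le_mul fun x y ↦ ?_
  rw [dist_eq_norm, ← expect_sub_distrib]
  refine (norm_expect_le _ _).trans (expect_le univ_nonempty fun i _ ↦ ?_)
  rw [← dist_eq_norm]
  exact (hf i).dist_le_mul x y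

end Expect

section IndependentCoordinates

variable {ι κ : Type*} [Fintype ι] [Fintype κ] [DecidableEq κ]

theorem expect_expect_update {M : Type*} [AddCommMonoid M] [Module ℚ≥0 M]
    [Nonempty ι] (f : (κ → ι) → M) (k : κ) :
    𝔼 J, 𝔼 i, f (update J k i) = 𝔼 J, f J := by
  let swap : Equiv.Perm ((κ → ι) × ι) :=
    Involutive.toPerm (fun p ↦ (update p.1 k p.2, p.1 k)) fun p ↦ by simp
  calc 𝔼 J, 𝔼 i, f (update J k i)
    _ = 𝔼 p : (κ → ι) × ι, f (swap p).1 := by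
        rw [← univ_product_univ, expect_product]; rfl
    _ = 𝔼 p : (κ → ι) × ι, f p.1 := Fintype.expect_equiv swap _ _ fun _ ↦ rfl
    _ = 𝔼 J, f J := by
        simp only [← univ_product_univ, expect_product, Fintype.expect_const]

variable [Nonempty ι]

theorem expect_comp_eval {M : Type*} [AddCommMonoid M] [Module ℚ≥0 M] (f : ι → M) (k : κ) :
    𝔼 J : κ → ι, f (J k) = 𝔼 i, f i := by
  rw [← expect_expect_update _ k]
  simp only [update_self, Fintype.expect_const]

theorem expect_expect_comp [Nonempty κ] {M : Type*} [AddCommMonoid M] [Module ℚ≥0 M] (f : ι → M) :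
    𝔼 J : κ → ι, 𝔼 k, f (J k) = 𝔼 i, f i := by
  rw [expect_comm]
  simp only [expect_comp_eval, Fintype.expect_const]

variable {E : Type*} [NormedAddCommGroup E] [InnerProductSpace ℝ E] [Module ℚ≥0 E]

theorem expect_inner_comp_eval_of_ne {k l : κ} (hkl : k ≠ l) (x y : ι → E) :
    𝔼 J : κ → ι, ⟪x (J k), y (J l)⟫_ℝ = ⟪𝔼 i, x i, 𝔼 i, y i⟫_ℝ := by
  rw [← expect_expect_update _ k]
  simp only [update_self, update_of_ne hkl.symm, ← expect_inner, ← inner_expect]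
  rw [expect_comp_eval y l]

variable [Nonempty κ]

-- The off-diagonal terms of `‖𝔼 k, x (J k)‖ ^ 2 = 𝔼 k, 𝔼 l, ⟪x (J k), x (J l)⟫` average to zero.
theorem expect_norm_expect_comp_sq {x : ι → E} (hx : 𝔼 i, x i = 0) :
    𝔼 J : κ → ι, ‖𝔼 k, x (J k)‖ ^ 2 = (𝔼 i, ‖x i‖ ^ 2) / Fintype.card κ := by
  have hcov (k l : κ) : 𝔼 J : κ → ι, ⟪x (J k), x (J l)⟫_ℝ =
      if k = l then 𝔼 i, ‖x i‖ ^ 2 else 0 := by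
    split_ifs with hkl
    · simp only [hkl, real_inner_self_eq_norm_sq]
      exact expect_comp_eval (fun i ↦ ‖x i‖ ^ 2) l
    · rw [expect_inner_comp_eval_of_ne hkl, hx, inner_zero_left]
  calc 𝔼 J : κ → ι, ‖𝔼 k, x (J k)‖ ^ 2
    _ = 𝔼 J : κ → ι, 𝔼 l, 𝔼 k, ⟪x (J k), x (J l)⟫_ℝ := by
        simp only [← real_inner_self_eq_norm_sq, expect_inner, inner_expect]
    _ = 𝔼 l : κ, 𝔼 k : κ, 𝔼 J : κ → ι, ⟪x (J k), x (J l)⟫_ℝ := by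
        rw [expect_comm]
        exact expect_congr rfl fun l _ ↦ expect_comm _ _ _
    _ = (𝔼 i, ‖x i‖ ^ 2) / Fintype.card κ := by
        simp only [hcov, Fintype.expect_ite_eq', NNRat.smul_def, NNRat.cast_inv,
          NNRat.cast_natCast, inv_mul_eq_div, Fintype.expect_const (ι := κ)]

theorem expect_norm_expect_comp_sub_expect_sq (x : ι → E) :
    𝔼 J : κ → ι, ‖𝔼 k, x (J k) - 𝔼 i, x i‖ ^ 2 =
      (𝔼 i, ‖x i - 𝔼 j, x j‖ ^ 2) / Fintype.card κ := by
  rw [← expect_norm_expect_comp_sq]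
  · simp only [expect_sub_distrib, Fintype.expect_const]
  · rw [expect_sub_distrib, Fintype.expect_const, sub_self]

end IndependentCoordinates

section RandomRecursion

variable {Ω X : Type*} {T : ℕ} {step : Ω → X → X} {x₀ : X} {W : (Fin T → Ω) → ℕ → X}

theorem recursion_eq_of_forall_lt_eq (hW0 : ∀ S, W S 0 = x₀)
    (hW : ∀ S (t : Fin T), W S (t + 1) = step (S t) (W S t)) {S S' : Fin T → Ω} {t : ℕ}
    (ht : t ≤ T) (hS : ∀ s : Fin T, s < t → S s = S' s) : W S t = W S' t := by
  induction t with
  | zero => rw [hW0, hW0]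
  | succ t ih =>
    rw [hW S ⟨t, ht⟩, hW S' ⟨t, ht⟩, hS ⟨t, ht⟩ t.lt_succ_self,
      ih (by lia) fun s hs ↦ hS s (by lia)]

variable [Fintype Ω] [Nonempty Ω]

-- `W S t` does not involve `S t`, so resampling that coordinate averages over a fresh step.
theorem expect_recursion_succ (hW0 : ∀ S, W S 0 = x₀)
    (hW : ∀ S (t : Fin T), W S (t + 1) = step (S t) (W S t)) {M : Type*} [AddCommMonoid M]
    [Module ℚ≥0 M] (Φ : X → M) (t : Fin T) :
    𝔼 S, Φ (W S (t + 1)) = 𝔼 S, 𝔼 ω, Φ (step ω (W S t)) := by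
  have hupdate (S : Fin T → Ω) (ω : Ω) : W (update S t ω) t = W S t :=
    recursion_eq_of_forall_lt_eq hW0 hW t.is_lt.le fun s hs ↦ update_of_ne (Fin.ne_of_lt hs) _ _
  rw [← expect_expect_update _ t]
  simp only [hW, update_self, hupdate]

theorem sum_expect_le_of_drift (hW0 : ∀ S, W S 0 = x₀)
    (hW : ∀ S (t : Fin T), W S (t + 1) = step (S t) (W S t)) {Φ δ : X → ℝ} {c : ℝ}
    (hdrift : ∀ x, 𝔼 ω, Φ (step ω x) ≤ Φ x - δ x + c) :
    ∑ t ∈ range T, 𝔼 S, δ (W S t) ≤ Φ x₀ - 𝔼 S, Φ (W S T) + T * c := by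
  have hstep : ∀ t ∈ range T,
      𝔼 S, δ (W S t) ≤ 𝔼 S, Φ (W S t) - 𝔼 S, Φ (W S (t + 1)) + c := by
    intro t ht
    have hsucc := expect_recursion_succ hW0 hW Φ ⟨t, mem_range.1 ht⟩
    have hle := expect_le_expect fun (S : Fin T → Ω) (_ : S ∈ univ) ↦ hdrift (W S t)
    rw [← hsucc, expect_add_distrib, expect_sub_distrib, Fintype.expect_const] at hle
    linarith
  refine (sum_le_sum hstep).trans_eq ?_
  rw [sum_add_distrib, sum_range_sub', sum_const, card_range, nsmul_eq_mul]
  simp only [hW0, Fintype.expect_const]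

end RandomRecursion

section SAM

variable {E : Type*} [NormedAddCommGroup E] [InnerProductSpace ℝ E]

/-- One step of sharpness-aware minimization with learning rate `γ` and (unnormalized) ascent
radius `ρ`, where `v` is the gradient field, exact or stochastic: the same `v` is used for the
ascent to `x + ρ • v x` and for the descent from `x`. -/
def samStep (γ ρ : ℝ) (v : E → E) (x : E) : E := x - γ • v (x + ρ • v x)

variable {β : ℝ≥0} {γ ρ : ℝ}

theorem norm_apply_add_smul_sub_le {v : E → E} (hv : LipschitzWith β v) (hρ : 0 ≤ ρ) (x : E) :
    ‖v (x + ρ • v x) - v x‖ ≤ β * ρ * ‖v x‖ := by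
  simpa [norm_smul, abs_of_nonneg hρ, mul_assoc] using hv.norm_sub_le (x + ρ • v x) x

variable [CompleteSpace E] {F : E → ℝ} {G : E → E}

theorem apply_add_le_of_lipschitzWith_gradient (hF : ∀ x, HasGradientAt F (G x) x)
    (hG : LipschitzWith β G) (x h : E) :
    F (x + h) ≤ F x + ⟪G x, h⟫_ℝ + β / 2 * ‖h‖ ^ 2 := by
  have hline (t : ℝ) : HasDerivAt (fun t : ℝ ↦ F (x + t • h)) ⟪G (x + t • h), h⟫_ℝ t :=
    (hF (x + t • h)).hasFDerivAt.comp_hasDerivAt t (f := fun t : ℝ ↦ x + t • h)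
      (by simpa using ((hasDerivAt_id t).smul_const h).const_add x)
  have hquad (t : ℝ) :
      HasDerivAt (fun t : ℝ ↦ F x + t * ⟪G x, h⟫_ℝ + β / 2 * ‖h‖ ^ 2 * t ^ 2)
        (⟪G x, h⟫_ℝ + β * ‖h‖ ^ 2 * t) t := by
    refine ((((hasDerivAt_id t).mul_const _).const_add _).add
      (((hasDerivAt_id t).pow 2).const_mul _)).congr_deriv ?_
    simp only [id_eq]
    ring
  have hslope : ∀ t ∈ Set.Ico (0 : ℝ) 1,
      ⟪G (x + t • h), h⟫_ℝ ≤ ⟪G x, h⟫_ℝ + β * ‖h‖ ^ 2 * t := by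
    intro t ht
    rw [← sub_le_iff_le_add', ← inner_sub_left]
    calc ⟪G (x + t • h) - G x, h⟫_ℝ
      _ ≤ ‖G (x + t • h) - G x‖ * ‖h‖ := real_inner_le_norm _ _
      _ ≤ β * ‖x + t • h - x‖ * ‖h‖ := by gcongr; exact hG.norm_sub_le _ _
      _ = β * ‖h‖ ^ 2 * t := by
        rw [add_sub_cancel_left, norm_smul, Real.norm_of_nonneg ht.1]
        ring
  simpa using image_le_of_deriv_right_le_deriv_boundary
    (fun t _ ↦ (hline t).continuousAt.continuousWithinAt) (fun t _ ↦ (hline t).hasDerivWithinAt)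
    (by simp) (fun t _ ↦ (hquad t).continuousAt.continuousWithinAt)
    (fun t _ ↦ (hquad t).hasDerivWithinAt) hslope (Set.right_mem_Icc.2 zero_le_one)

theorem apply_samStep_le {v : E → E} (hF : ∀ x, HasGradientAt F (G x) x)
    (hG : LipschitzWith β G) (hv : LipschitzWith β v) (hγ : 0 ≤ γ) (hρ : 0 ≤ ρ)
    (hβρ : (1 + β * ρ) ^ 2 ≤ 2) (x : E) :
    F (samStep γ ρ v x) ≤ F x - γ * ⟪v x, G x⟫_ℝ + γ / 4 * ‖G x‖ ^ 2
      + γ * ((β * ρ) ^ 2 + β * γ) * ‖v x‖ ^ 2 := by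
  set u := v (x + ρ • v x)
  have hdiff : ‖u - v x‖ ≤ β * ρ * ‖v x‖ := norm_apply_add_smul_sub_le hv hρ x
  have hu : ‖u‖ ^ 2 ≤ 2 * ‖v x‖ ^ 2 :=
    calc ‖u‖ ^ 2
      _ ≤ ((1 + β * ρ) * ‖v x‖) ^ 2 := by
        gcongr
        linarith [norm_le_norm_add_norm_sub' u (v x)]
      _ ≤ 2 * ‖v x‖ ^ 2 := by
        rw [mul_pow]
        gcongr
  have hinner : ⟪v x, G x⟫_ℝ - ‖G x‖ ^ 2 / 4 - (β * ρ) ^ 2 * ‖v x‖ ^ 2 ≤ ⟪u, G x⟫_ℝ := by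
    have hcs : ⟪v x - u, G x⟫_ℝ ≤ β * ρ * ‖v x‖ * ‖G x‖ :=
      (real_inner_le_norm _ _).trans <| by rw [norm_sub_rev]; gcongr
    rw [inner_sub_left] at hcs
    linarith [sq_nonneg (β * ρ * ‖v x‖ - ‖G x‖ / 2)]
  calc F (samStep γ ρ v x)
    _ ≤ F x - γ * ⟪u, G x⟫_ℝ + β / 2 * γ ^ 2 * ‖u‖ ^ 2 := by
      have h := apply_add_le_of_lipschitzWith_gradient hF hG x (-(γ • u))
      rw [inner_neg_right, inner_smul_right, norm_neg, norm_smul, Real.norm_of_nonneg hγ,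
        real_inner_comm, mul_pow, ← mul_assoc, ← sub_eq_add_neg, ← sub_eq_add_neg] at h
      exact h
    _ ≤ F x - γ * (⟪v x, G x⟫_ℝ - ‖G x‖ ^ 2 / 4 - (β * ρ) ^ 2 * ‖v x‖ ^ 2)
        + β / 2 * γ ^ 2 * (2 * ‖v x‖ ^ 2) := by gcongr
    _ = _ := by ring

variable [Module ℚ≥0 E] {Ω : Type*} [Fintype Ω] [Nonempty Ω] {v : Ω → E → E} {s : ℝ}

theorem expect_samStep_le (hF : ∀ x, HasGradientAt F (𝔼 ω, v ω x) x)
    (hv : ∀ ω, LipschitzWith β (v ω)) (hγ : 0 ≤ γ) (hρ : 0 ≤ ρ) (hβρ : (1 + β * ρ) ^ 2 ≤ 2)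
    (hsteps : (β * ρ) ^ 2 + β * γ ≤ 1 / 2) {x : E}
    (hvar : 𝔼 ω, ‖v ω x - 𝔼 ω', v ω' x‖ ^ 2 ≤ s) :
    𝔼 ω, F (samStep γ ρ (v ω) x) ≤
      F x - γ / 4 * ‖𝔼 ω, v ω x‖ ^ 2 + γ * ((β * ρ) ^ 2 + β * γ) * s := by
  set m := 𝔼 ω, v ω x
  set c := (β * ρ) ^ 2 + β * γ
  have hmoment : 𝔼 ω, ‖v ω x‖ ^ 2 ≤ s + ‖m‖ ^ 2 := by
    linarith [expect_norm_sub_expect_sq fun ω ↦ v ω x]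
  calc 𝔼 ω, F (samStep γ ρ (v ω) x)
    _ ≤ 𝔼 ω, (F x - γ * ⟪v ω x, m⟫_ℝ + γ / 4 * ‖m‖ ^ 2 + γ * c * ‖v ω x‖ ^ 2) :=
      expect_le_expect fun ω _ ↦
        apply_samStep_le hF (lipschitzWith_expect hv) (hv ω) hγ hρ hβρ x
    _ = F x - γ * ‖m‖ ^ 2 + γ / 4 * ‖m‖ ^ 2 + γ * c * 𝔼 ω, ‖v ω x‖ ^ 2 := by
      simp only [expect_add_distrib, expect_sub_distrib, ← mul_expect, ← expect_inner,
        Fintype.expect_const, m, real_inner_self_eq_norm_sq]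
    _ ≤ F x - γ * ‖m‖ ^ 2 + γ / 4 * ‖m‖ ^ 2 + γ * c * (s + ‖m‖ ^ 2) := by gcongr
    _ = F x - 3 / 4 * γ * ‖m‖ ^ 2 + γ * ‖m‖ ^ 2 * c + γ * c * s := by ring
    _ ≤ F x - 3 / 4 * γ * ‖m‖ ^ 2 + γ * ‖m‖ ^ 2 * (1 / 2) + γ * c * s := by gcongr
    _ = F x - γ / 4 * ‖m‖ ^ 2 + γ * c * s := by ring

theorem expect_norm_gradient_sq_sam_le (hF : ∀ x, HasGradientAt F (𝔼 ω, v ω x) x)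
    (hv : ∀ ω, LipschitzWith β (v ω)) (hvar : ∀ x, 𝔼 ω, ‖v ω x - 𝔼 ω', v ω' x‖ ^ 2 ≤ s)
    {m : ℝ} (hm : ∀ x, m ≤ F x) (hγ : 0 < γ) (hρ : 0 ≤ ρ) (hβρ : (1 + β * ρ) ^ 2 ≤ 2)
    (hsteps : (β * ρ) ^ 2 + β * γ ≤ 1 / 2) {T : ℕ} (hT : 0 < T) {x₀ : E}
    {W : (Fin T → Ω) → ℕ → E} (hW0 : ∀ S, W S 0 = x₀)
    (hW : ∀ S (t : Fin T), W S (t + 1) = samStep γ ρ (v (S t)) (W S t)) :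
    1 / T * 𝔼 S, ∑ t ∈ range T, ‖𝔼 ω, v ω (W S t)‖ ^ 2 ≤
      4 / (T * γ) * (F x₀ - m) + 4 * ((β * ρ) ^ 2 + β * γ) * s := by
  have hsum := sum_expect_le_of_drift hW0 hW
    fun x ↦ expect_samStep_le hF hv hγ.le hρ hβρ hsteps (hvar x)
  have hlower : m ≤ 𝔼 S, F (W S T) := le_expect univ_nonempty fun S _ ↦ hm (W S T)
  simp only [← mul_expect, ← mul_sum, ← expect_sum_comm] at hsum
  have : (0 : ℝ) < T := Nat.cast_pos.2 hT
  calc 1 / T * 𝔼 S, ∑ t ∈ range T, ‖𝔼 ω, v ω (W S t)‖ ^ 2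
    _ = 4 / (T * γ) * (γ / 4 * 𝔼 S, ∑ t ∈ range T, ‖𝔼 ω, v ω (W S t)‖ ^ 2) := by field_simp
    _ ≤ 4 / (T * γ) * (F x₀ - m + T * (γ * ((β * ρ) ^ 2 + β * γ) * s)) := by
      gcongr
      linarith
    _ = 4 / (T * γ) * (F x₀ - m) + 4 * ((β * ρ) ^ 2 + β * γ) * s := by field_simp

end SAM

section StepSizes

-- The threshold is the fourth power of `1 + √2`, which lies between `33` and `34`.
theorem one_add_inv_rpow_quarter_sq_le_two {x : ℝ} (hx : 34 ≤ x) :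
    (1 + 1 / x ^ ((1 : ℝ) / 4)) ^ 2 ≤ 2 := by
  set q := x ^ ((1 : ℝ) / 4)
  have hq4 : q ^ 4 = x := by
    rw [← Real.rpow_natCast, ← Real.rpow_mul (by linarith)]
    norm_num
  have hq : 2.4143 ≤ q :=
    le_of_pow_le_pow_left₀ four_ne_zero (by positivity) (hq4 ▸ le_trans (by norm_num) hx)
  calc (1 + 1 / q) ^ 2
    _ ≤ (1 + 1 / 2.4143) ^ 2 := by gcongr
    _ ≤ 2 := by norm_num

theorem inv_rpow_quarter_sq {x : ℝ} (hx : 0 ≤ x) :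
    (1 / x ^ ((1 : ℝ) / 4)) ^ 2 = 1 / √x := by
  rw [div_pow, one_pow, ← Real.rpow_natCast, ← Real.rpow_mul hx, Real.sqrt_eq_rpow]
  norm_num

end StepSizes

theorem msam_stochastic_convergence_rate_general {E ι κ : Type*} [NormedAddCommGroup E]
    [InnerProductSpace ℝ E] [CompleteSpace E] [Module ℚ≥0 E] [Fintype ι] [Nonempty ι] [Fintype κ]
    [Nonempty κ] [DecidableEq κ] {ℓ : ι → E → ℝ} {g : ι → E → E}
    (hg : ∀ i x, HasGradientAt (ℓ i) (g i x) x) {β : ℝ≥0} (hβ : 0 < β)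
    (hLip : ∀ i, LipschitzWith β (g i)) {σ : ℝ}
    (hvar : ∀ x, 𝔼 i, ‖g i x - 𝔼 j, g j x‖ ^ 2 ≤ σ ^ 2) {m : ℝ} (hm : ∀ x, m ≤ 𝔼 i, ℓ i x)
    {T : ℕ} (hT : 34 ≤ T) {γ ρ : ℝ} (hγ : γ = 1 / (√T * β))
    (hρ : ρ = 1 / ((T : ℝ) ^ ((1 : ℝ) / 4) * β)) {x₀ : E} {W : (Fin T → κ → ι) → ℕ → E}
    (hW0 : ∀ S, W S 0 = x₀)
    (hW : ∀ S (t : Fin T), W S (t + 1) = samStep γ ρ (fun x ↦ 𝔼 k, g (S t k) x) (W S t)) :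
    1 / T * 𝔼 S, ∑ t ∈ range T, ‖𝔼 i, g i (W S t)‖ ^ 2 ≤
      4 * β / √T * (𝔼 i, ℓ i x₀ - m) + 8 * σ ^ 2 / (Fintype.card κ * √T) := by
  have hmean (x : E) : 𝔼 J : κ → ι, 𝔼 k, g (J k) x = 𝔼 i, g i x := expect_expect_comp fun i ↦ g i x
  have hvar' (x : E) : 𝔼 J : κ → ι, ‖𝔼 k, g (J k) x - 𝔼 J' : κ → ι, 𝔼 k, g (J' k) x‖ ^ 2 ≤
      σ ^ 2 / Fintype.card κ := by
    rw [hmean, expect_norm_expect_comp_sub_expect_sq fun i ↦ g i x]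
    gcongr
    exact hvar x
  have hgrad (x : E) :
      HasGradientAt (fun y ↦ 𝔼 i, ℓ i y) (𝔼 J : κ → ι, 𝔼 k, g (J k) x) x :=
    hmean x ▸ hasGradientAt_expect univ fun i _ ↦ hg i x
  have hT' : (34 : ℝ) ≤ T := by exact_mod_cast hT
  have hβρ : β * ρ = 1 / (T : ℝ) ^ ((1 : ℝ) / 4) := by rw [hρ]; field_simp
  have hβγ : β * γ = (β * ρ) ^ 2 := by
    rw [hβρ, inv_rpow_quarter_sq (by positivity), hγ]; field_simp
  have hsmall : (1 + β * ρ) ^ 2 ≤ 2 := hβρ ▸ one_add_inv_rpow_quarter_sq_le_two hT'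
  have hγ0 : 0 < γ := by rw [hγ]; positivity
  have hρ0 : 0 ≤ ρ := by rw [hρ]; positivity
  have hsteps : (β * ρ) ^ 2 + β * γ ≤ 1 / 2 := by
    have hhalf : β * ρ ≤ 1 / 2 := by nlinarith
    rw [hβγ]
    linarith [pow_le_pow_left₀ (mul_nonneg β.coe_nonneg hρ0) hhalf 2]
  have hrate : 4 / (T * γ) * (𝔼 i, ℓ i x₀ - m) +
      4 * ((β * ρ) ^ 2 + β * γ) * (σ ^ 2 / Fintype.card κ) =
      4 * β / √T * (𝔼 i, ℓ i x₀ - m) + 8 * σ ^ 2 / (Fintype.card κ * √T) := by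
    have hTγ : 4 / (T * γ) = 4 * β / √T := by
      rw [hγ]
      field_simp
      rw [Real.sq_sqrt T.cast_nonneg]
    rw [hTγ, hβγ, hβρ, inv_rpow_quarter_sq T.cast_nonneg]
    ring
  simpa only [hmean, hrate] using
    expect_norm_gradient_sq_sam_le hgrad (fun J ↦ lipschitzWith_expect fun k ↦ hLip (J k)) hvar' hm
      hγ0 hρ0 hsmall hsteps (by lia) hW0 hW

section EmpiricalRisk

variable {d n b : ℕ} (g : Fin n → EuclideanSpace ℝ (Fin d) → EuclideanSpace ℝ (Fin d))

theorem fullLoss_eq_expect (ℓ : Fin n → EuclideanSpace ℝ (Fin d) → ℝ) :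
    fullLoss ℓ = fun w ↦ 𝔼 i, ℓ i w := by
  funext w
  rw [fullLoss, expect_eq_inv_card_smul_sum, card_fin, smul_eq_mul]

theorem fullGrad_eq_expect : fullGrad g = fun w ↦ 𝔼 i, g i w := by
  funext w
  rw [fullGrad, expect_eq_inv_card_smul_sum, card_fin]

theorem batchGrad_eq_expect (J : Fin b → Fin n) : batchGrad g J = fun w ↦ 𝔼 k, g (J k) w := by
  funext w
  rw [batchGrad, expect_eq_inv_card_smul_sum, card_fin]

end EmpiricalRisk

/-- Convergence of stochastic m-SAM with the horizon-dependent step sizes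
`γ = 1/(√T·β)`, `ρ = 1/(T^{1/4}·β)`: under individual `β`-smoothness, (A1), boundedness below
of `L` with infimum `L*`, and `T ≥ 256`, iterating
`w_{t+1} = w_t − γ∇L_{J_t}(w_t + ρ∇L_{J_t}(w_t))` from `w_0` and averaging uniformly over all
batch sequences,
`(1/T)·E[∑_{t<T} ‖∇L(w_t)‖²] ≤ (4β/√T)(L(w_0) − L*) + 8σ²/(b√T)`. -/
theorem msam_stochastic_convergence_rate {d n b : ℕ} (hn : 0 < n) (hb : 1 ≤ b)
    (ℓ : Fin n → EuclideanSpace ℝ (Fin d) → ℝ)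
    (g : Fin n → EuclideanSpace ℝ (Fin d) → EuclideanSpace ℝ (Fin d))
    (hg : ∀ i x, HasGradientAt (ℓ i) (g i x) x)
    (β : ℝ) (hβ : 0 < β) (hLip : ∀ i, LipschitzWith β.toNNReal (g i))
    (σ : ℝ) (hσ : 0 ≤ σ)
    (hvar : ∀ x, (n : ℝ)⁻¹ * ∑ i, ‖g i x - fullGrad g x‖ ^ 2 ≤ σ ^ 2)
    (Lstar : ℝ) (hinf : IsGLB (Set.range (fullLoss ℓ)) Lstar)
    (T : ℕ) (hT : 256 ≤ T)
    (γ ρ : ℝ) (hγ : γ = 1 / (Real.sqrt T * β)) (hρ : ρ = 1 / ((T : ℝ) ^ ((1 : ℝ) / 4) * β))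
    (w0 : EuclideanSpace ℝ (Fin d))
    (W : (Fin T → (Fin b → Fin n)) → ℕ → EuclideanSpace ℝ (Fin d))
    (hW0 : ∀ S, W S 0 = w0)
    (hWrec : ∀ S, ∀ t : Fin T,
      W S ((t : ℕ) + 1) =
        W S (t : ℕ) - γ • batchGrad g (S t) (W S (t : ℕ) + ρ • batchGrad g (S t) (W S (t : ℕ)))) :
    (1 / (T : ℝ)) *
        ((Fintype.card (Fin T → (Fin b → Fin n)) : ℝ)⁻¹ *
          ∑ S : Fin T → (Fin b → Fin n), ∑ t ∈ Finset.range T, ‖fullGrad g (W S t)‖ ^ 2) ≤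
      4 * β / Real.sqrt T * (fullLoss ℓ w0 - Lstar) + 8 * σ ^ 2 / (b * Real.sqrt T) := by
  have : NeZero n := ⟨hn.ne'⟩
  have : NeZero b := ⟨by lia⟩
  lift β to ℝ≥0 using hβ.le
  simp only [Real.toNNReal_coe] at hLip
  simp only [fullLoss_eq_expect, fullGrad_eq_expect, batchGrad_eq_expect] at hvar hinf hWrec ⊢
  simpa [expect_eq_inv_card_smul_sum] using
    msam_stochastic_convergence_rate_general hg (by exact_mod_cast hβ) hLip (σ := σ)
      (fun x ↦ by simpa [expect_eq_inv_card_smul_sum] using hvar x)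
      (fun x ↦ hinf.1 ⟨x, rfl⟩) (by lia) hγ hρ hW0 hWrec
end

section
/- Let L(w) = (1/(4n))·‖Xβ(w) − y‖² on ℝ^{2d} and fix ρ ≥ 0 and α ∈ ℝ^d with all α_i > 0. Let w : [0,∞) → ℝ^{2d} be a C¹ solution of the full-batch n-SAM gradient flow w′(t) = −∇L(w(t) + ρ∇L(w(t))) with w(0) = (α, α). Set w_sam(t) = w(t) + ρ∇L(w(t)), r(t) = Xβ(w(t)) − y, and r_sam(t) = Xβ(w_sam(t)) − y. Assume the improper integrals ∫₀^∞ Xᵀ r_sam(s) ds and I := ∫₀^∞ (Xᵀ r_sam(s)) ⊙ (Xᵀ r(s)) ds converge componentwise, and that w(t) converges to some w_∞ whose predictor β_∞ = β(w_∞) interpolates the data, Xβ_∞ = y. Define α′ ∈ ℝ^d_{>0} by (α′_i)² = α_i²·exp(−(2ρ/n²)·I_i). Then β_∞ minimizes φ_{α′}(β) over the affine set {β ∈ ℝ^d : Xβ = y}. -/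
open scoped RealInnerProductSpace

noncomputable section

/-- Linear predictor of a diagonal linear network: `β(w)ⱼ = (w₊)ⱼ² − (w₋)ⱼ²`, where the
parameter vector `v ∈ ℝ^{2d}` is indexed by `Fin d ⊕ Fin d` (`inl` = `w₊`, `inr` = `w₋`). -/
def betaOf {d : ℕ} (v : EuclideanSpace ℝ (Fin d ⊕ Fin d)) (j : Fin d) : ℝ :=
  v (Sum.inl j) ^ 2 - v (Sum.inr j) ^ 2

/-- Residual of the predictor at the `i`-th data point: `⟨β(v), xᵢ⟩ − yᵢ`. -/
def resid {d n : ℕ} (X : Matrix (Fin n) (Fin d) ℝ) (y : Fin n → ℝ)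
    (v : EuclideanSpace ℝ (Fin d ⊕ Fin d)) (i : Fin n) : ℝ :=
  ∑ j, X i j * betaOf v j - y i

/-- The squared-loss objective `L(w) = (1/(4n))‖Xβ(w) − y‖²`. -/
def nSamLoss {d n : ℕ} (X : Matrix (Fin n) (Fin d) ℝ) (y : Fin n → ℝ)
    (v : EuclideanSpace ℝ (Fin d ⊕ Fin d)) : ℝ :=
  (4 * n : ℝ)⁻¹ * ∑ i, resid X y v i ^ 2

/-- `j`-th component of `Xᵀ r(v)` where `r(v)` is the residual vector. -/
def XTresid {d n : ℕ} (X : Matrix (Fin n) (Fin d) ℝ) (y : Fin n → ℝ)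
    (v : EuclideanSpace ℝ (Fin d ⊕ Fin d)) (j : Fin d) : ℝ :=
  ∑ i, X i j * resid X y v i

/-- The n-SAM ascent point `w_sam(t) = w(t) + ρ∇L(w(t))`. -/
def nSamAscent {d n : ℕ} (X : Matrix (Fin n) (Fin d) ℝ) (y : Fin n → ℝ) (ρ : ℝ)
    (w : ℝ → EuclideanSpace ℝ (Fin d ⊕ Fin d)) (t : ℝ) : EuclideanSpace ℝ (Fin d ⊕ Fin d) :=
  w t + ρ • gradient (nSamLoss X y) (w t)

/-- `q(z) = 2 − √(4 + z²) + z·arcsinh(z/2)`. -/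
def hypq (z : ℝ) : ℝ := 2 - Real.sqrt (4 + z ^ 2) + z * Real.arsinh (z / 2)

/-- The hyperbolic-entropy potential `φ_α(β) = ∑ⱼ αⱼ² q(βⱼ/αⱼ²)`. -/
def hypEntropy {d : ℕ} (α : Fin d → ℝ) (b : Fin d → ℝ) : ℝ :=
  ∑ j, α j ^ 2 * hypq (b j / α j ^ 2)

end

/-!
Along the flow each coordinate of `w₊` and `w₋` solves a scalar linear equation, with rates
`∓(Xᵀ r_sam)ⱼ / n - ρ (Xᵀ r_sam)ⱼ (Xᵀ r)ⱼ / n²`. The odd part of the rates moves `β` and the even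
part rescales the potential: with `α(t)² = α² exp (-(2ρ/n²) ∫₀ᵗ Xᵀ r_sam ⊙ Xᵀ r)` one finds
`∇φ_{α(t)}(β(w(t))) = arsinh (β(w(t)) / (2 α(t)²)) = -(2/n) ∫₀ᵗ Xᵀ r_sam`, a vector orthogonal to
`ker X`. Orthogonality survives the limit `t → ∞`, and since `φ_{α'}` is convex,
`∇φ_{α'}(β_∞) ⊥ ker X` says that the interpolator `β_∞` is a minimizer.
-/

open Filter MeasureTheory Set Topology
open scoped Matrix

theorem add_mul_sub_le_of_convexOn {S : Set ℝ} {f : ℝ → ℝ} {f' x z : ℝ} (hf : ConvexOn ℝ S f)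
    (hx : x ∈ S) (hz : z ∈ S) (hd : HasDerivAt f f' x) : f x + f' * (z - x) ≤ f z := by
  rcases lt_trichotomy x z with h | rfl | h
  · have := hf.le_slope_of_hasDerivAt hx hz h hd
    rw [slope_def_field, le_div_iff₀ (sub_pos.2 h)] at this
    linarith
  · simp
  · have := hf.slope_le_of_hasDerivAt hz hx h hd
    rw [slope_def_field, div_le_iff₀ (sub_pos.2 h)] at this
    linarith

section HyperbolicEntropy

theorem hasDerivAt_hypq (z : ℝ) : HasDerivAt hypq (Real.arsinh (z / 2)) z := by
  have hpos : 0 < 4 + z ^ 2 := by positivity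
  have hsqrt : √(1 + (z / 2) ^ 2) = √(4 + z ^ 2) / 2 := by
    rw [show 1 + (z / 2) ^ 2 = (4 + z ^ 2) / 2 ^ 2 by ring, Real.sqrt_div' _ (by positivity),
      Real.sqrt_sq zero_le_two]
  have hroot : HasDerivAt (fun x : ℝ ↦ √(4 + x ^ 2)) (2 * z / (2 * √(4 + z ^ 2))) z := by
    simpa using (((hasDerivAt_id z).pow 2).const_add 4).sqrt hpos.ne'
  have harsinh := (hasDerivAt_id z).mul ((hasDerivAt_id z).div_const 2).arsinh
  refine ((hroot.const_sub 2).add harsinh).congr_deriv ?_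
  simp only [id_eq, smul_eq_mul, hsqrt]
  field_simp
  ring

theorem convexOn_hypq : ConvexOn ℝ univ hypq := by
  refine Monotone.convexOn_univ_of_deriv (fun z ↦ (hasDerivAt_hypq z).differentiableAt) ?_
  rw [funext fun z ↦ (hasDerivAt_hypq z).deriv]
  exact Real.arsinh_strictMono.monotone.comp fun a b hab ↦ by linarith

/-- The mirror map `∇φ_α(β)ⱼ = arsinh (βⱼ / (2 αⱼ²))` of the hyperbolic entropy. -/
noncomputable def hypEntropyGrad {d : ℕ} (α b : Fin d → ℝ) (j : Fin d) : ℝ :=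
  Real.arsinh (b j / (2 * α j ^ 2))

variable {d : ℕ} {α : Fin d → ℝ}

theorem hypEntropy_add_hypEntropyGrad_dotProduct_le (hα : ∀ j, α j ≠ 0) (b b' : Fin d → ℝ) :
    hypEntropy α b + hypEntropyGrad α b ⬝ᵥ (b' - b) ≤ hypEntropy α b' := by
  simp only [hypEntropy, dotProduct, ← Finset.sum_add_distrib]
  refine Finset.sum_le_sum fun j _ ↦ ?_
  have hne := hα j
  calc α j ^ 2 * hypq (b j / α j ^ 2) + hypEntropyGrad α b j * (b' - b) j
      = α j ^ 2 * (hypq (b j / α j ^ 2) +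
          Real.arsinh (b j / α j ^ 2 / 2) * (b' j / α j ^ 2 - b j / α j ^ 2)) := by
        rw [hypEntropyGrad, Pi.sub_apply, div_div, mul_comm (α j ^ 2) 2]
        field_simp
    _ ≤ α j ^ 2 * hypq (b' j / α j ^ 2) :=
        mul_le_mul_of_nonneg_left (add_mul_sub_le_of_convexOn convexOn_hypq (mem_univ _)
          (mem_univ _) (hasDerivAt_hypq _)) (sq_nonneg _)

theorem isMinOn_hypEntropy_of_dotProduct_eq_zero {ι : Type*} {X : Matrix ι (Fin d) ℝ} {y : ι → ℝ}
    {b : Fin d → ℝ} (hα : ∀ j, α j ≠ 0) (hb : X *ᵥ b = y)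
    (horth : ∀ v, X *ᵥ v = 0 → hypEntropyGrad α b ⬝ᵥ v = 0) :
    IsMinOn (hypEntropy α) {β | X *ᵥ β = y} b := fun b' (hb' : X *ᵥ b' = y) ↦ by
  have hker : X *ᵥ (b' - b) = 0 := by rw [Matrix.mulVec_sub, hb, hb', sub_self]
  simpa [horth _ hker] using hypEntropy_add_hypEntropyGrad_dotProduct_le hα b b'

theorem tendsto_hypEntropyGrad {ι : Type*} {l : Filter ι} {a b : ι → Fin d → ℝ}
    {b₀ : Fin d → ℝ} {j : Fin d} (hα : α j ≠ 0)
    (ha : Tendsto (fun t ↦ a t j ^ 2) l (𝓝 (α j ^ 2)))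
    (hb : Tendsto (fun t ↦ b t j) l (𝓝 (b₀ j))) :
    Tendsto (fun t ↦ hypEntropyGrad (a t) (b t) j) l (𝓝 (hypEntropyGrad α b₀ j)) :=
  (hb.div (ha.const_mul 2) (by positivity)).arsinh

end HyperbolicEntropy

section LinearODE

theorem hasDerivWithinAt_integral_Ici {E : Type*} [NormedAddCommGroup E] [NormedSpace ℝ E]
    [CompleteSpace E] {c : ℝ → E} {a b t : ℝ} (hc : ContinuousOn c (Icc a b))
    (ht : t ∈ Ico a b) : HasDerivWithinAt (fun u ↦ ∫ s in a..u, c s) (c t) (Ici t) t := by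
  have hsub : Ioo t b ⊆ Icc a b := fun s hs ↦ ⟨ht.1.trans hs.1.le, hs.2.le⟩
  have hcIoo : ContinuousOn c (Ioo t b) := hc.mono hsub
  have hint : IntervalIntegrable c volume a t :=
    (hc.mono (Icc_subset_Icc_right ht.2.le)).intervalIntegrable_of_Icc ht.1
  refine intervalIntegral.integral_hasDerivWithinAt_right hint (t := Ioi t) ?_ ?_
  · exact ⟨Ioo t b, Ioo_mem_nhdsGT ht.2, hcIoo.aestronglyMeasurable measurableSet_Ioo⟩
  · exact ((hc t (Ico_subset_Icc_self ht)).mono hsub).mono_of_mem_nhdsWithin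
      (Ioo_mem_nhdsGT ht.2)

theorem eq_exp_integral_smul_of_hasDerivWithinAt {E : Type*} [NormedAddCommGroup E]
    [NormedSpace ℝ E] {c : ℝ → ℝ} {f : ℝ → E} {a b : ℝ} (hab : a ≤ b)
    (hc : ContinuousOn c (Icc a b)) (hf : ContinuousOn f (Icc a b))
    (hf' : ∀ t ∈ Ico a b, HasDerivWithinAt f (c t • f t) (Ici t) t) :
    f b = Real.exp (∫ s in a..b, c s) • f a := by
  set C : ℝ → ℝ := fun t ↦ ∫ s in a..t, c s
  have hC : ContinuousOn C (Icc a b) := by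
    simpa [uIcc_of_le hab] using intervalIntegral.continuousOn_primitive_interval
      (hc.integrableOn_Icc.mono_set (uIcc_of_le hab).le)
  have hconst : Real.exp (-C b) • f b = Real.exp (-C a) • f a :=
    constant_of_has_deriv_right_zero (f := fun t ↦ Real.exp (-C t) • f t) (hC.neg.rexp.smul hf)
      (fun t ht ↦ ((hasDerivWithinAt_integral_Ici hc ht).neg.exp.smul (hf' t ht)).congr_deriv
        (by simp [smul_smul])) b ⟨hab, le_rfl⟩
  rw [show C a = 0 from intervalIntegral.integral_same, neg_zero, Real.exp_zero, one_smul]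
    at hconst
  rw [← hconst, smul_smul, ← Real.exp_add, add_neg_cancel, Real.exp_zero, one_smul]

end LinearODE

section Gradient

theorem gradient_apply_eq_fderiv_single {ι : Type*} [Fintype ι] [DecidableEq ι]
    (f : EuclideanSpace ℝ ι → ℝ) (v : EuclideanSpace ℝ ι) (k : ι) :
    gradient f v k = fderiv ℝ f v (EuclideanSpace.single k 1) := by
  rw [← inner_gradient_left, EuclideanSpace.inner_single_right, one_mul, conj_trivial]

theorem continuous_gradient {F : Type*} [NormedAddCommGroup F] [InnerProductSpace ℝ F]
    [CompleteSpace F] {f : F → ℝ} (hf : ContDiff ℝ 1 f) : Continuous (gradient f) :=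
  (InnerProductSpace.toDual ℝ F).symm.continuous.comp (hf.continuous_fderiv one_ne_zero)

/-- The differential of `v ↦ βⱼ(v)`. -/
noncomputable def betaOfFDeriv {d : ℕ} (v : EuclideanSpace ℝ (Fin d ⊕ Fin d)) (j : Fin d) :
    EuclideanSpace ℝ (Fin d ⊕ Fin d) →L[ℝ] ℝ :=
  (2 * v (Sum.inl j)) • EuclideanSpace.proj (Sum.inl j) -
    (2 * v (Sum.inr j)) • EuclideanSpace.proj (Sum.inr j)

theorem hasFDerivAt_betaOf {d : ℕ} (v : EuclideanSpace ℝ (Fin d ⊕ Fin d)) (j : Fin d) :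
    HasFDerivAt (fun u ↦ betaOf u j) (betaOfFDeriv v j) v := by
  have hsq (k : Fin d ⊕ Fin d) := (PiLp.hasFDerivAt_apply (𝕜 := ℝ) 2 v k).pow 2
  exact ((hsq (Sum.inl j)).fun_sub (hsq (Sum.inr j))).congr_fderiv (by ext u; simp [betaOfFDeriv])

theorem continuous_betaOf {d : ℕ} (j : Fin d) :
    Continuous fun v : EuclideanSpace ℝ (Fin d ⊕ Fin d) ↦ betaOf v j := by
  unfold betaOf
  fun_prop

theorem betaOfFDeriv_single_inl {d : ℕ} (v : EuclideanSpace ℝ (Fin d ⊕ Fin d)) (i j : Fin d) :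
    betaOfFDeriv v j (EuclideanSpace.single (Sum.inl i) 1) =
      if j = i then 2 * v (Sum.inl j) else 0 := by
  by_cases hji : j = i <;> simp [betaOfFDeriv, hji]

theorem betaOfFDeriv_single_inr {d : ℕ} (v : EuclideanSpace ℝ (Fin d ⊕ Fin d)) (i j : Fin d) :
    betaOfFDeriv v j (EuclideanSpace.single (Sum.inr i) 1) =
      if j = i then -(2 * v (Sum.inr j)) else 0 := by
  by_cases hji : j = i <;> simp [betaOfFDeriv, hji]

variable {d n : ℕ} (X : Matrix (Fin n) (Fin d) ℝ) (y : Fin n → ℝ)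

theorem continuous_XTresid (j : Fin d) : Continuous fun v ↦ XTresid X y v j := by
  unfold XTresid resid betaOf
  fun_prop

theorem contDiff_nSamLoss {m : WithTop ℕ∞} : ContDiff ℝ m (nSamLoss X y) := by
  unfold nSamLoss resid betaOf
  fun_prop

variable {X y}

theorem XTresid_dotProduct_eq_zero {v : Fin d → ℝ} (hv : X *ᵥ v = 0)
    (u : EuclideanSpace ℝ (Fin d ⊕ Fin d)) : XTresid X y u ⬝ᵥ v = 0 := by
  have hvec : XTresid X y u = resid X y u ᵥ* X := by
    ext j
    simp [XTresid, Matrix.vecMul, dotProduct, mul_comm]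
  rw [hvec, ← Matrix.dotProduct_mulVec, hv, dotProduct_zero]

theorem hasFDerivAt_resid (v : EuclideanSpace ℝ (Fin d ⊕ Fin d)) (i : Fin n) :
    HasFDerivAt (fun u ↦ resid X y u i) (∑ j, X i j • betaOfFDeriv v j) v :=
  (HasFDerivAt.fun_sum fun j _ ↦ (hasFDerivAt_betaOf v j).const_mul (X i j)).sub_const (y i)

theorem hasFDerivAt_nSamLoss (v : EuclideanSpace ℝ (Fin d ⊕ Fin d)) :
    HasFDerivAt (nSamLoss X y) ((2 * n : ℝ)⁻¹ • ∑ j, XTresid X y v j • betaOfFDeriv v j) v := by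
  refine ((HasFDerivAt.fun_sum fun i _ ↦ (hasFDerivAt_resid v i).pow 2).const_mul
    (4 * n : ℝ)⁻¹).congr_fderiv ?_
  simp only [XTresid, Finset.smul_sum, Finset.sum_smul, smul_smul]
  rw [Finset.sum_comm]
  refine Finset.sum_congr rfl fun j _ ↦ Finset.sum_congr rfl fun i _ ↦ ?_
  congr 1
  simp only [mul_inv_rev, Nat.add_one_sub_one, pow_one, nsmul_eq_mul, Nat.cast_ofNat]
  ring

theorem gradient_nSamLoss_inl (v : EuclideanSpace ℝ (Fin d ⊕ Fin d)) (j : Fin d) :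
    gradient (nSamLoss X y) v (Sum.inl j) = (n : ℝ)⁻¹ * XTresid X y v j * v (Sum.inl j) := by
  rw [gradient_apply_eq_fderiv_single, (hasFDerivAt_nSamLoss v).fderiv]
  simp only [smul_apply, sum_apply, betaOfFDeriv_single_inl,
    smul_eq_mul, mul_ite, mul_zero, Finset.sum_ite_eq', Finset.mem_univ, if_true]
  ring

theorem gradient_nSamLoss_inr (v : EuclideanSpace ℝ (Fin d ⊕ Fin d)) (j : Fin d) :
    gradient (nSamLoss X y) v (Sum.inr j) = -(n : ℝ)⁻¹ * XTresid X y v j * v (Sum.inr j) := by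
  rw [gradient_apply_eq_fderiv_single, (hasFDerivAt_nSamLoss v).fderiv]
  simp only [smul_apply, sum_apply, betaOfFDeriv_single_inr,
    smul_eq_mul, mul_ite, mul_zero, Finset.sum_ite_eq', Finset.mem_univ, if_true]
  ring

end Gradient

section Flow

variable {d n : ℕ} (X : Matrix (Fin n) (Fin d) ℝ) (y : Fin n → ℝ) (ρ : ℝ)
  (w : ℝ → EuclideanSpace ℝ (Fin d ⊕ Fin d))

/-- `w` solves the n-SAM gradient flow on `[0, ∞)`, with a one-sided derivative at `0`. -/
def IsNSamFlow : Prop :=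
  ∀ t ∈ Ici (0 : ℝ), HasDerivWithinAt w (-gradient (nSamLoss X y) (nSamAscent X y ρ w t)) (Ici 0) t

/-- `∫₀ᵗ (Xᵀ r_sam(s))ⱼ ds`, the dual variable accumulated along the flow. -/
noncomputable def samIntegral (j : Fin d) (t : ℝ) : ℝ :=
  ∫ s in 0..t, XTresid X y (nSamAscent X y ρ w s) j

/-- `∫₀ᵗ (Xᵀ r_sam(s))ⱼ (Xᵀ r(s))ⱼ ds`, the quantity which drives the scale of the potential. -/
noncomputable def samCrossIntegral (j : Fin d) (t : ℝ) : ℝ :=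
  ∫ s in 0..t, XTresid X y (nSamAscent X y ρ w s) j * XTresid X y (w s) j

/-- The scale `α(t)` for which the flow at time `t` is a mirror flow of `φ_{α(t)}`. -/
noncomputable def nSamScale (α : Fin d → ℝ) (t : ℝ) (j : Fin d) : ℝ :=
  α j * Real.exp (-(ρ / (n : ℝ) ^ 2) * samCrossIntegral X y ρ w j t)

variable {X y ρ w} {α : Fin d → ℝ} {t : ℝ}

theorem nSamScale_sq (j : Fin d) : nSamScale X y ρ w α t j ^ 2 =
    α j ^ 2 * Real.exp (-(2 * ρ / (n : ℝ) ^ 2) * samCrossIntegral X y ρ w j t) := by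
  rw [nSamScale, mul_pow, ← Real.exp_nat_mul]
  ring_nf

namespace IsNSamFlow

theorem continuousOn (h : IsNSamFlow X y ρ w) : ContinuousOn w (Ici 0) :=
  fun t ht ↦ (h t ht).continuousWithinAt

theorem continuousOn_XTresid (h : IsNSamFlow X y ρ w) (j : Fin d) :
    ContinuousOn (fun s ↦ XTresid X y (w s) j) (Ici 0) :=
  (continuous_XTresid X y j).comp_continuousOn h.continuousOn

theorem continuousOn_XTresid_nSamAscent (h : IsNSamFlow X y ρ w) (j : Fin d) :
    ContinuousOn (fun s ↦ XTresid X y (nSamAscent X y ρ w s) j) (Ici 0) :=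
  (continuous_XTresid X y j).comp_continuousOn <| h.continuousOn.add <|
    ((continuous_gradient (contDiff_nSamLoss X y)).comp_continuousOn h.continuousOn).const_smul ρ

theorem hasDerivWithinAt_apply (h : IsNSamFlow X y ρ w) {j : Fin d} {k : Fin d ⊕ Fin d} {σ : ℝ}
    (hk : ∀ v, gradient (nSamLoss X y) v k = σ * XTresid X y v j * v k) (ht : 0 ≤ t) :
    HasDerivWithinAt (fun s ↦ w s k)
      ((-σ * XTresid X y (nSamAscent X y ρ w t) j - ρ * σ ^ 2 *
        (XTresid X y (nSamAscent X y ρ w t) j * XTresid X y (w t) j)) * w t k) (Ici t) t := by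
  have hascent : nSamAscent X y ρ w t k = w t k + ρ * (σ * XTresid X y (w t) j * w t k) := by
    simp [nSamAscent, hk]
  have hderiv := (PiLp.hasFDerivAt_apply (𝕜 := ℝ) 2 (w t) k).comp_hasDerivWithinAt t (h t ht)
  refine (hderiv.mono (Ici_subset_Ici.2 ht)).congr_deriv ?_
  simp only [PiLp.proj_apply, PiLp.neg_apply, hk, hascent]
  ring

theorem apply_eq_exp_mul (h : IsNSamFlow X y ρ w) {j : Fin d} {k : Fin d ⊕ Fin d} {σ : ℝ}
    (hk : ∀ v, gradient (nSamLoss X y) v k = σ * XTresid X y v j * v k) (ht : 0 ≤ t) :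
    w t k = Real.exp (-σ * samIntegral X y ρ w j t -
      ρ * σ ^ 2 * samCrossIntegral X y ρ w j t) * w 0 k := by
  have hsam : ContinuousOn (fun s ↦ XTresid X y (nSamAscent X y ρ w s) j) (Icc 0 t) :=
    (h.continuousOn_XTresid_nSamAscent j).mono Icc_subset_Ici_self
  have hcross : ContinuousOn
      (fun s ↦ XTresid X y (nSamAscent X y ρ w s) j * XTresid X y (w s) j) (Icc 0 t) :=
    hsam.mul ((h.continuousOn_XTresid j).mono Icc_subset_Ici_self)
  have hw : ContinuousOn (fun s ↦ w s k) (Icc 0 t) :=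
    (PiLp.continuous_apply 2 _ k).comp_continuousOn (h.continuousOn.mono Icc_subset_Ici_self)
  have hrate : ∫ s in 0..t, (-σ * XTresid X y (nSamAscent X y ρ w s) j -
      ρ * σ ^ 2 * (XTresid X y (nSamAscent X y ρ w s) j * XTresid X y (w s) j)) =
      -σ * samIntegral X y ρ w j t - ρ * σ ^ 2 * samCrossIntegral X y ρ w j t := by
    rw [intervalIntegral.integral_sub ((hsam.const_mul _).intervalIntegrable_of_Icc ht)
      ((hcross.const_mul _).intervalIntegrable_of_Icc ht), intervalIntegral.integral_const_mul,
      intervalIntegral.integral_const_mul, samIntegral, samCrossIntegral]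
  rw [← hrate]
  exact eq_exp_integral_smul_of_hasDerivWithinAt ht
    ((hsam.const_mul _).sub (hcross.const_mul _)) hw fun s hs ↦ h.hasDerivWithinAt_apply hk hs.1

theorem betaOf_eq (h : IsNSamFlow X y ρ w)
    (hinit : ∀ j, w 0 (Sum.inl j) = α j ∧ w 0 (Sum.inr j) = α j) (ht : 0 ≤ t) (j : Fin d) :
    betaOf (w t) j = 2 * nSamScale X y ρ w α t j ^ 2 *
      Real.sinh (-(2 / n) * samIntegral X y ρ w j t) := by
  rw [betaOf, h.apply_eq_exp_mul (fun v ↦ gradient_nSamLoss_inl v j) ht,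
    h.apply_eq_exp_mul (fun v ↦ gradient_nSamLoss_inr v j) ht, (hinit j).1, (hinit j).2,
    nSamScale_sq, Real.sinh_eq, mul_pow, mul_pow, ← Real.exp_nat_mul, ← Real.exp_nat_mul]
  simp only [mul_sub, mul_div_assoc', mul_assoc, ← Real.exp_add]
  ring_nf

theorem hypEntropyGrad_betaOf (h : IsNSamFlow X y ρ w) (hα : ∀ j, α j ≠ 0)
    (hinit : ∀ j, w 0 (Sum.inl j) = α j ∧ w 0 (Sum.inr j) = α j) (ht : 0 ≤ t) :
    hypEntropyGrad (nSamScale X y ρ w α t) (betaOf (w t)) =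
      fun j ↦ -(2 / n) * samIntegral X y ρ w j t := by
  ext j
  have hscale : nSamScale X y ρ w α t j ≠ 0 := mul_ne_zero (hα j) (Real.exp_ne_zero _)
  rw [hypEntropyGrad, h.betaOf_eq hinit ht, mul_div_cancel_left₀ _ (by positivity),
    Real.arsinh_sinh]

theorem samIntegral_dotProduct_eq_zero (h : IsNSamFlow X y ρ w) {v : Fin d → ℝ}
    (hv : X *ᵥ v = 0) (ht : 0 ≤ t) : (fun j ↦ samIntegral X y ρ w j t) ⬝ᵥ v = 0 := by
  have hint (j : Fin d) : IntervalIntegrable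
      (fun s ↦ XTresid X y (nSamAscent X y ρ w s) j * v j) volume 0 t :=
    (((h.continuousOn_XTresid_nSamAscent j).mono Icc_subset_Ici_self).mul_const
      _).intervalIntegrable_of_Icc ht
  calc (fun j ↦ samIntegral X y ρ w j t) ⬝ᵥ v
      = ∫ s in 0..t, XTresid X y (nSamAscent X y ρ w s) ⬝ᵥ v := by
        simp only [dotProduct, samIntegral, ← intervalIntegral.integral_mul_const]
        exact (intervalIntegral.integral_finsetSum fun j _ ↦ hint j).symm
    _ = 0 := by simp [XTresid_dotProduct_eq_zero hv]

theorem hypEntropyGrad_dotProduct_eq_zero (h : IsNSamFlow X y ρ w) (hα : ∀ j, α j ≠ 0)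
    (hinit : ∀ j, w 0 (Sum.inl j) = α j ∧ w 0 (Sum.inr j) = α j) {v : Fin d → ℝ}
    (hv : X *ᵥ v = 0) (ht : 0 ≤ t) :
    hypEntropyGrad (nSamScale X y ρ w α t) (betaOf (w t)) ⬝ᵥ v = 0 := by
  rw [h.hypEntropyGrad_betaOf hα hinit ht]
  exact (smul_dotProduct (-(2 / n : ℝ)) (fun j ↦ samIntegral X y ρ w j t) v).trans
    (by rw [h.samIntegral_dotProduct_eq_zero hv ht, smul_zero])

end IsNSamFlow

theorem nsam_implicit_bias_diagonal_network_general (hα : ∀ j, α j ≠ 0)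
    (hflow : IsNSamFlow X y ρ w)
    (hinit : ∀ j, w 0 (Sum.inl j) = α j ∧ w 0 (Sum.inr j) = α j)
    {I : Fin d → ℝ} (hI : ∀ j, Tendsto (samCrossIntegral X y ρ w j) atTop (𝓝 (I j)))
    {βinf : Fin d → ℝ} (hconv : ∀ j, Tendsto (fun t ↦ betaOf (w t) j) atTop (𝓝 (βinf j)))
    (hinterp : X *ᵥ βinf = y) {α' : Fin d → ℝ}
    (hα' : ∀ j, α' j ^ 2 = α j ^ 2 * Real.exp (-(2 * ρ / (n : ℝ) ^ 2) * I j)) :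
    IsMinOn (hypEntropy α') {β | X *ᵥ β = y} βinf := by
  have hα'_ne (j : Fin d) : α' j ≠ 0 :=
    (pow_ne_zero_iff two_ne_zero).1 <| hα' j ▸
      mul_ne_zero (pow_ne_zero 2 (hα j)) (Real.exp_ne_zero _)
  have hscale (j : Fin d) :
      Tendsto (fun t ↦ nSamScale X y ρ w α t j ^ 2) atTop (𝓝 (α' j ^ 2)) := by
    simp only [nSamScale_sq, hα']
    exact ((hI j).const_mul _).rexp.const_mul _
  refine isMinOn_hypEntropy_of_dotProduct_eq_zero hα'_ne hinterp fun v hv ↦ ?_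
  have hlim : Tendsto (fun t ↦ hypEntropyGrad (nSamScale X y ρ w α t) (betaOf (w t)) ⬝ᵥ v) atTop
      (𝓝 (hypEntropyGrad α' βinf ⬝ᵥ v)) :=
    tendsto_finsetSum _ fun j _ ↦
      (tendsto_hypEntropyGrad (hα'_ne j) (hscale j) (hconv j)).mul_const _
  refine tendsto_nhds_unique hlim (tendsto_const_nhds.congr' ?_)
  filter_upwards [eventually_ge_atTop 0] with t ht
  exact (hflow.hypEntropyGrad_dotProduct_eq_zero hα hinit hv ht).symm

end Flow

/-- Implicit bias of the full-batch n-SAM gradient flow for diagonal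
linear networks: if the flow `w′(t) = −∇L(w(t) + ρ∇L(w(t)))` started at `w(0) = (α, α)`
converges to `w_∞` with interpolating predictor `β_∞ = β(w_∞)` (`Xβ_∞ = y`), and the stated
improper integrals converge, then `β_∞` minimizes `φ_{α′}` over `{β : Xβ = y}`, where
`(α′ⱼ)² = αⱼ²·exp(−(2ρ/n²)·∫₀^∞ (Xᵀr_sam(s))ⱼ (Xᵀr(s))ⱼ ds)`. -/
theorem nsam_implicit_bias_diagonal_network {d n : ℕ}
    (X : Matrix (Fin n) (Fin d) ℝ) (y : Fin n → ℝ)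
    (ρ : ℝ) (hρ : 0 ≤ ρ) (α : Fin d → ℝ) (hα : ∀ j, 0 < α j)
    (w : ℝ → EuclideanSpace ℝ (Fin d ⊕ Fin d))
    (hflow : ∀ t ∈ Set.Ici (0 : ℝ), HasDerivWithinAt w
      (-gradient (nSamLoss X y) (nSamAscent X y ρ w t)) (Set.Ici 0) t)
    (hinit : ∀ j, w 0 (Sum.inl j) = α j ∧ w 0 (Sum.inr j) = α j)
    (hint1 : ∀ j : Fin d, MeasureTheory.IntegrableOn
      (fun s => XTresid X y (nSamAscent X y ρ w s) j) (Set.Ioi 0))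
    (hint2 : ∀ j : Fin d, MeasureTheory.IntegrableOn
      (fun s => XTresid X y (nSamAscent X y ρ w s) j * XTresid X y (w s) j) (Set.Ioi 0))
    (winf : EuclideanSpace ℝ (Fin d ⊕ Fin d))
    (hconv : Filter.Tendsto w Filter.atTop (nhds winf))
    (hinterp : ∀ i, ∑ j, X i j * betaOf winf j = y i)
    (α' : Fin d → ℝ) (hα'pos : ∀ j, 0 < α' j)
    (hα' : ∀ j, α' j ^ 2 = α j ^ 2 * Real.exp (-(2 * ρ / (n : ℝ) ^ 2) *
      ∫ s in Set.Ioi (0 : ℝ), XTresid X y (nSamAscent X y ρ w s) j * XTresid X y (w s) j)) :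
    ∀ β' : Fin d → ℝ, (∀ i, ∑ j, X i j * β' j = y i) →
      hypEntropy α' (betaOf winf) ≤ hypEntropy α' β' := fun _ hβ' ↦
  nsam_implicit_bias_diagonal_network_general (fun j ↦ (hα j).ne') hflow hinit
    (fun j ↦ intervalIntegral_tendsto_integral_Ioi 0 (hint2 j) tendsto_id)
    (fun j ↦ ((continuous_betaOf j).tendsto winf).comp hconv) (funext hinterp) hα' (funext hβ')
end

section
/- For i = 1,…,n let ℓ_i(w) = (1/4)(⟨β(w), x_i⟩ − y_i)² on ℝ^{2d}, and fix ρ ≥ 0 and α ∈ ℝ^d with all α_i > 0. Let w : [0,∞) → ℝ^{2d} be a C¹ solution of the full-batch 1-SAM gradient flow w′(t) = −(1/n)∑_{i=1}^n ∇ℓ_i(w(t) + ρ∇ℓ_i(w(t))) with w(0) = (α, α). Set r_i(t) = ⟨β(w(t)), x_i⟩ − y_i and r_{sam,i}(t) = ⟨β(w(t) + ρ∇ℓ_i(w(t))), x_i⟩ − y_i. Assume the improper integrals ∫₀^∞ r_{sam,i}(s) ds and ∫₀^∞ r_{sam,i}(s)·r_i(s) ds converge for each i, and that w(t) converges to some w_∞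 whose predictor β_∞ = β(w_∞) satisfies Xβ_∞ = y. Define α′ ∈ ℝ^d_{>0} componentwise by (α′_j)² = α_j²·exp(−(2ρ/n)·∑_{i=1}^n x_{ij}²·∫₀^∞ r_{sam,i}(s) r_i(s) ds). Then β_∞ minimizes φ_{α′}(β) over the affine set {β ∈ ℝ^d : Xβ = y}. -/
open scoped RealInnerProductSpace

noncomputable section

/-- The per-example squared loss `ℓᵢ(w) = (1/4)(⟨β(w), xᵢ⟩ − yᵢ)²`. -/
def exLoss {d n : ℕ} (X : Matrix (Fin n) (Fin d) ℝ) (y : Fin n → ℝ) (i : Fin n)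
    (v : EuclideanSpace ℝ (Fin d ⊕ Fin d)) : ℝ :=
  (1 / 4 : ℝ) * resid X y v i ^ 2

/-- The 1-SAM ascent point for example `i`: `w(t) + ρ∇ℓᵢ(w(t))`. -/
def oneSamAscent {d n : ℕ} (X : Matrix (Fin n) (Fin d) ℝ) (y : Fin n → ℝ) (ρ : ℝ)
    (w : ℝ → EuclideanSpace ℝ (Fin d ⊕ Fin d)) (i : Fin n) (t : ℝ) :
    EuclideanSpace ℝ (Fin d ⊕ Fin d) :=
  w t + ρ • gradient (exLoss X y i) (w t)

end

/-!
Put `ξᵢ = (xᵢ, −xᵢ) ∈ ℝ^{2d}`, so that `⟨β(w), xᵢ⟩ = ∑ₖ ξᵢₖ wₖ²` and `∇ℓᵢ(w) = rᵢ ξᵢ ⊙ w`. The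
ascent step multiplies `wₖ` by `1 + ρ rᵢ ξᵢₖ`, so each coordinate solves a scalar linear equation
`wₖ' = −(1/n) ∑ᵢ (ξᵢₖ r_{sam,i} + ρ ξᵢₖ² r_{sam,i} rᵢ) wₖ`. In its explicit solution the part of
the exponent that is even in `ξ` is common to `w₊` and `w₋` and turns `α` into `α'`; the odd part
gives `β_∞ = 2 α'² ⊙ sinh(Xᵀλ)` with `λᵢ = −(2/n) ∫ r_{sam,i}`. Since `arcsinh(z/2)` is the
derivative of `q`, this says that `Xᵀλ` is the gradient of the convex potential `φ_{α'}` at `β_∞`,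
which is the optimality condition for minimizing `φ_{α'}` over `β_∞ + ker X`.
-/

open Filter MeasureTheory Set Topology Matrix

section ImproperIntegral

/-- The improper integral `∫₀^∞ f`, possibly only conditionally convergent, has the value `I`.
Meant for `f` integrable on bounded intervals: where `f` is not integrable on `[0, t]`, the integral
`∫ s in 0..t, f s` has the junk value `0`. -/
def HasImproperIntegral (f : ℝ → ℝ) (I : ℝ) : Prop :=
  Tendsto (fun t => ∫ s in 0..t, f s) atTop (𝓝 I)

theorem hasImproperIntegral_of_integrableOn {f : ℝ → ℝ} (hf : IntegrableOn f (Ioi 0)) :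
    HasImproperIntegral f (∫ s in Ioi 0, f s) :=
  intervalIntegral_tendsto_integral_Ioi 0 hf tendsto_id

end ImproperIntegral

section LinearODE

theorem eq_exp_integral_smul_of_hasDerivWithinAt_Ici {E : Type*} [NormedAddCommGroup E]
    [NormedSpace ℝ E] {f : ℝ → E} {c : ℝ → ℝ} {a b : ℝ} (hab : a ≤ b)
    (hc : ContinuousOn c (Icc a b)) (hf : ContinuousOn f (Icc a b))
    (hf' : ∀ t ∈ Ico a b, HasDerivWithinAt f (c t • f t) (Ici t) t) :
    f b = Real.exp (∫ s in a..b, c s) • f a := by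
  have hc_int : IntervalIntegrable c volume a b := hc.intervalIntegrable_of_Icc hab
  have hC : ContinuousOn (fun t => ∫ s in a..t, c s) (Icc a b) := by
    simpa only [uIcc_of_le hab] using
      intervalIntegral.continuousOn_primitive_interval' hc_int left_mem_uIcc
  have hC' : ∀ t ∈ Ico a b, HasDerivWithinAt (fun t => ∫ s in a..t, c s) (c t) (Ici t) t := by
    intro t ht
    have hle : 𝓝[>] t ≤ 𝓝[Icc a b] t := nhdsWithin_le_of_mem (Icc_mem_nhdsGT_of_mem ht)
    exact intervalIntegral.integral_hasDerivWithinAt_right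
      (hc_int.mono_set (uIcc_subset_uIcc_left (Icc_subset_uIcc (Ico_subset_Icc_self ht))))
      ((hc.stronglyMeasurableAtFilter_nhdsWithin measurableSet_Icc t).filter_mono hle)
      ((hc t (Ico_subset_Icc_self ht)).mono_left hle)
  have hconst := constant_of_has_deriv_right_zero (f := fun t => Real.exp (-∫ s in a..t, c s) • f t)
    (hC.neg.rexp.smul hf)
    (fun t ht => ((hC' t ht).neg.exp.smul (hf' t ht)).congr_deriv (by simp [smul_smul]))
    b (right_mem_Icc.2 hab)
  simp only [intervalIntegral.integral_same, neg_zero, Real.exp_zero, one_smul] at hconst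
  rw [← hconst, smul_smul, ← Real.exp_add, add_neg_cancel, Real.exp_zero, one_smul]

end LinearODE

section HyperbolicEntropy

theorem cosh_add_sub_mul_sinh_le_cosh (u v : ℝ) :
    Real.cosh v + (u - v) * Real.sinh v ≤ Real.cosh u := by
  have exp_tangent (a b : ℝ) : Real.exp b * (a - b + 1) ≤ Real.exp a := by
    calc Real.exp b * (a - b + 1) ≤ Real.exp b * Real.exp (a - b) := by
          gcongr; exact Real.add_one_le_exp _
      _ = Real.exp a := by rw [← Real.exp_add, add_sub_cancel]
  rw [Real.cosh_eq, Real.sinh_eq, Real.cosh_eq]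
  linarith [exp_tangent u v, exp_tangent (-u) (-v)]

theorem hypq_two_mul_sinh (u : ℝ) :
    hypq (2 * Real.sinh u) = 2 - 2 * Real.cosh u + 2 * Real.sinh u * u := by
  have hsqrt : √(4 + (2 * Real.sinh u) ^ 2) = 2 * Real.cosh u := by
    rw [show 4 + (2 * Real.sinh u) ^ 2 = (2 * Real.cosh u) ^ 2 by linarith [Real.cosh_sq u]]
    exact Real.sqrt_sq (by positivity)
  rw [hypq, hsqrt, mul_div_cancel_left₀ _ two_ne_zero, Real.arsinh_sinh]

theorem hypq_two_mul_sinh_add_mul_sub_le (u z : ℝ) :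
    hypq (2 * Real.sinh u) + u * (z - 2 * Real.sinh u) ≤ hypq z := by
  obtain ⟨v, rfl⟩ : ∃ v, 2 * Real.sinh v = z :=
    ⟨Real.arsinh (z / 2), by rw [Real.sinh_arsinh, mul_div_cancel₀ _ two_ne_zero]⟩
  rw [hypq_two_mul_sinh, hypq_two_mul_sinh]
  linarith [cosh_add_sub_mul_sinh_le_cosh u v]

variable {d : ℕ} {α b : Fin d → ℝ}

theorem hypEntropy_add_dotProduct_sub_le {u : Fin d → ℝ} (hα : ∀ j, α j ≠ 0)
    (hb : ∀ j, b j = α j ^ 2 * (2 * Real.sinh (u j))) (b' : Fin d → ℝ) :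
    hypEntropy α b + u ⬝ᵥ (b' - b) ≤ hypEntropy α b' := by
  simp only [hypEntropy, dotProduct, Pi.sub_apply, ← Finset.sum_add_distrib]
  refine Finset.sum_le_sum fun j _ => ?_
  have hαj : α j ^ 2 ≠ 0 := pow_ne_zero 2 (hα j)
  calc α j ^ 2 * hypq (b j / α j ^ 2) + u j * (b' j - b j)
      = α j ^ 2 * (hypq (2 * Real.sinh (u j))
          + u j * (b' j / α j ^ 2 - 2 * Real.sinh (u j))) := by
        rw [hb j, mul_div_cancel_left₀ _ hαj]
        linear_combination -u j * mul_div_cancel₀ (b' j) hαj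
    _ ≤ α j ^ 2 * hypq (b' j / α j ^ 2) := by
        gcongr
        exact hypq_two_mul_sinh_add_mul_sub_le _ _

theorem hypEntropy_le_of_mulVec_eq {ι : Type*} [Fintype ι] {X : Matrix ι (Fin d) ℝ} {c : ι → ℝ}
    (hα : ∀ j, α j ≠ 0) (hb : ∀ j, b j = α j ^ 2 * (2 * Real.sinh ((c ᵥ* X) j)))
    {b' : Fin d → ℝ} (hb' : X *ᵥ b' = X *ᵥ b) : hypEntropy α b ≤ hypEntropy α b' := by
  have hker : (c ᵥ* X) ⬝ᵥ (b' - b) = 0 := by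
    rw [← dotProduct_mulVec, mulVec_sub, hb', sub_self, dotProduct_zero]
  simpa only [hker, add_zero] using hypEntropy_add_dotProduct_sub_le hα hb b'

end HyperbolicEntropy

section Loss

variable {d n : ℕ} (X : Matrix (Fin n) (Fin d) ℝ) (y : Fin n → ℝ)

/-- The matrix `(X, −X)` whose rows are the vectors `ξᵢ = (xᵢ, −xᵢ) ∈ ℝ^{2d}`; it lets the blocks
`w₊` and `w₋` of the parameter be handled together. -/
def signedData : Matrix (Fin n) (Fin d ⊕ Fin d) ℝ := fromCols X (-X)

theorem resid_eq_sum_signedData (v : EuclideanSpace ℝ (Fin d ⊕ Fin d)) (i : Fin n) :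
    resid X y v i = ∑ k, signedData X i k * v k ^ 2 - y i := by
  simp [resid, betaOf, signedData, Fintype.sum_sum_type, mul_sub, ← sub_eq_add_neg]

theorem continuous_resid (i : Fin n) : Continuous fun v => resid X y v i := by
  unfold resid betaOf
  fun_prop

theorem hasGradientAt_exLoss (i : Fin n) (v : EuclideanSpace ℝ (Fin d ⊕ Fin d)) :
    HasGradientAt (exLoss X y i)
      (WithLp.toLp 2 fun k => resid X y v i * signedData X i k * v k) v := by
  rw [hasGradientAt_iff_hasFDerivAt]
  have hresid : HasFDerivAt (fun v => resid X y v i)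
      (∑ k, (2 * signedData X i k * v k) •
        (PiLp.proj 2 (fun _ : Fin d ⊕ Fin d => ℝ) k : _ →L[ℝ] ℝ)) v := by
    simp only [resid_eq_sum_signedData]
    refine HasFDerivAt.sub_const (y i) (HasFDerivAt.fun_sum fun k _ => ?_)
    refine (((PiLp.hasFDerivAt_apply 2 v k).pow 2).const_mul (signedData X i k)).congr_fderiv ?_
    ext z
    simp only [PiLp.proj_apply, Nat.add_one_sub_one, pow_one, nsmul_eq_mul, Nat.cast_ofNat,
      _root_.smul_apply, smul_eq_mul]
    ring
  refine ((hresid.pow 2).const_mul (1 / 4 : ℝ)).congr_fderiv ?_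
  ext z
  simp only [Nat.add_one_sub_one, pow_one, nsmul_eq_mul, Nat.cast_ofNat, _root_.smul_apply,
    _root_.sum_apply, PiLp.proj_apply, smul_eq_mul, Finset.mul_sum,
    InnerProductSpace.toDual_apply_apply, PiLp.inner_apply, RCLike.inner_apply, conj_trivial]
  refine Finset.sum_congr rfl fun k _ => ?_
  ring

theorem gradient_exLoss_apply (i : Fin n) (v : EuclideanSpace ℝ (Fin d ⊕ Fin d))
    (k : Fin d ⊕ Fin d) :
    gradient (exLoss X y i) v k = resid X y v i * signedData X i k * v k := by
  rw [(hasGradientAt_exLoss X y i v).gradient]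

theorem continuous_gradient_exLoss (i : Fin n) : Continuous (gradient (exLoss X y i)) := by
  rw [gradient_eq (hasGradientAt_exLoss X y i)]
  have := continuous_resid X y i
  fun_prop

end Loss

section Flow

variable {d n : ℕ} {X : Matrix (Fin n) (Fin d) ℝ} {y : Fin n → ℝ} {ρ : ℝ}
  {w : ℝ → EuclideanSpace ℝ (Fin d ⊕ Fin d)}

theorem oneSamAscent_apply (i : Fin n) (t : ℝ) (k : Fin d ⊕ Fin d) :
    oneSamAscent X y ρ w i t k = (1 + ρ * resid X y (w t) i * signedData X i k) * w t k := by
  simp only [oneSamAscent, PiLp.add_apply, PiLp.smul_apply, gradient_exLoss_apply, smul_eq_mul]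
  ring

variable (X y ρ w) in
/-- The logarithmic derivative `wₖ' / wₖ` of the `k`-th coordinate along the 1-SAM gradient flow,
written so that it remains meaningful when `wₖ` vanishes. -/
noncomputable def oneSamLogRate (k : Fin d ⊕ Fin d) (t : ℝ) : ℝ :=
  -((n : ℝ)⁻¹ * ∑ i, (signedData X i k * resid X y (oneSamAscent X y ρ w i t) i +
    ρ * signedData X i k ^ 2 * (resid X y (oneSamAscent X y ρ w i t) i * resid X y (w t) i)))

theorem neg_smul_sum_gradient_oneSamAscent_apply (t : ℝ) (k : Fin d ⊕ Fin d) :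
    (-((n : ℝ)⁻¹ • ∑ i, gradient (exLoss X y i) (oneSamAscent X y ρ w i t))) k =
      oneSamLogRate X y ρ w k t * w t k := by
  simp only [oneSamLogRate, PiLp.neg_apply, PiLp.smul_apply, WithLp.ofLp_sum, Finset.sum_apply,
    gradient_exLoss_apply, smul_eq_mul, neg_mul, mul_assoc, Finset.sum_mul, oneSamAscent_apply]
  congr 2
  refine Finset.sum_congr rfl fun i _ => ?_
  ring

variable (X y ρ w) in
/-- The full-batch 1-SAM gradient flow `w' = −(1/n) ∑ᵢ ∇ℓᵢ(w + ρ∇ℓᵢ(w))` on `[0, ∞)`, with a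
one-sided derivative at `0`. -/
def IsOneSamFlow : Prop :=
  ∀ t ∈ Ici (0 : ℝ), HasDerivWithinAt w
    (-((n : ℝ)⁻¹ • ∑ i, gradient (exLoss X y i) (oneSamAscent X y ρ w i t))) (Ici 0) t

namespace IsOneSamFlow

theorem continuousOn (hw : IsOneSamFlow X y ρ w) : ContinuousOn w (Ici 0) :=
  fun t ht => (hw t ht).continuousWithinAt

theorem continuousOn_resid (hw : IsOneSamFlow X y ρ w) (i : Fin n) :
    ContinuousOn (fun t => resid X y (w t) i) (Ici 0) :=
  (continuous_resid X y i).comp_continuousOn hw.continuousOn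

theorem continuousOn_resid_oneSamAscent (hw : IsOneSamFlow X y ρ w) (i : Fin n) :
    ContinuousOn (fun t => resid X y (oneSamAscent X y ρ w i t) i) (Ici 0) :=
  (continuous_resid X y i).comp_continuousOn <| hw.continuousOn.add <|
    ((continuous_gradient_exLoss X y i).comp_continuousOn hw.continuousOn).const_smul ρ

theorem continuousOn_oneSamLogRate (hw : IsOneSamFlow X y ρ w) (k : Fin d ⊕ Fin d) :
    ContinuousOn (oneSamLogRate X y ρ w k) (Ici 0) := by
  have hr := hw.continuousOn_resid
  have hrsam := hw.continuousOn_resid_oneSamAscent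
  exact (continuousOn_const.mul <| continuousOn_finsetSum _ fun i _ =>
    (continuousOn_const.mul (hrsam i)).add (continuousOn_const.mul ((hrsam i).mul (hr i)))).neg

theorem hasDerivWithinAt_apply (hw : IsOneSamFlow X y ρ w) (k : Fin d ⊕ Fin d) {t : ℝ}
    (ht : 0 ≤ t) :
    HasDerivWithinAt (fun t => w t k) (oneSamLogRate X y ρ w k t * w t k) (Ici 0) t := by
  rw [← neg_smul_sum_gradient_oneSamAscent_apply]
  exact (PiLp.hasFDerivAt_apply 2 (w t) k).comp_hasDerivWithinAt t (hw t ht)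

theorem apply_eq_exp_integral_mul (hw : IsOneSamFlow X y ρ w) (k : Fin d ⊕ Fin d) {t : ℝ}
    (ht : 0 ≤ t) : w t k = Real.exp (∫ s in 0..t, oneSamLogRate X y ρ w k s) * w 0 k :=
  eq_exp_integral_smul_of_hasDerivWithinAt_Ici (f := fun t => w t k) ht
    ((hw.continuousOn_oneSamLogRate k).mono Icc_subset_Ici_self)
    (fun _ hs => (hw.hasDerivWithinAt_apply k hs.1).continuousWithinAt.mono Icc_subset_Ici_self)
    (fun _ hs => (hw.hasDerivWithinAt_apply k hs.1).mono (Ici_subset_Ici.2 hs.1))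

theorem integral_oneSamLogRate (hw : IsOneSamFlow X y ρ w) (k : Fin d ⊕ Fin d) {t : ℝ}
    (ht : 0 ≤ t) :
    ∫ s in 0..t, oneSamLogRate X y ρ w k s =
      -((n : ℝ)⁻¹ * ∑ i,
        (signedData X i k * (∫ s in 0..t, resid X y (oneSamAscent X y ρ w i s) i) +
          ρ * signedData X i k ^ 2 *
            ∫ s in 0..t, resid X y (oneSamAscent X y ρ w i s) i * resid X y (w s) i)) := by
  have hrsam (i : Fin n) : IntervalIntegrable
      (fun s => resid X y (oneSamAscent X y ρ w i s) i) volume 0 t :=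
    ((hw.continuousOn_resid_oneSamAscent i).mono Icc_subset_Ici_self).intervalIntegrable_of_Icc ht
  have hprod (i : Fin n) : IntervalIntegrable
      (fun s => resid X y (oneSamAscent X y ρ w i s) i * resid X y (w s) i) volume 0 t :=
    (((hw.continuousOn_resid_oneSamAscent i).mul (hw.continuousOn_resid i)).mono
      Icc_subset_Ici_self).intervalIntegrable_of_Icc ht
  simp only [oneSamLogRate, intervalIntegral.integral_neg, intervalIntegral.integral_const_mul]
  rw [intervalIntegral.integral_finsetSum fun i _ =>
    ((hrsam i).const_mul _).add ((hprod i).const_mul _)]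
  congr! 3 with i
  rw [intervalIntegral.integral_add ((hrsam i).const_mul _) ((hprod i).const_mul _),
    intervalIntegral.integral_const_mul, intervalIntegral.integral_const_mul]

variable {I J : Fin n → ℝ} {winf : EuclideanSpace ℝ (Fin d ⊕ Fin d)}

theorem limit_apply (hw : IsOneSamFlow X y ρ w)
    (hI : ∀ i, HasImproperIntegral (fun s => resid X y (oneSamAscent X y ρ w i s) i) (I i))
    (hJ : ∀ i, HasImproperIntegral
      (fun s => resid X y (oneSamAscent X y ρ w i s) i * resid X y (w s) i) (J i))
    (hconv : Tendsto w atTop (𝓝 winf)) (k : Fin d ⊕ Fin d) :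
    winf k = Real.exp
      (-((n : ℝ)⁻¹ * ∑ i, (signedData X i k * I i + ρ * signedData X i k ^ 2 * J i))) * w 0 k := by
  have hcoord : Tendsto (fun t => w t k) atTop (𝓝 (winf k)) :=
    ((PiLp.continuous_apply 2 _ k).tendsto winf).comp hconv
  have hexponent := ((tendsto_finsetSum Finset.univ fun i _ =>
    ((hI i).const_mul (signedData X i k)).add
      ((hJ i).const_mul (ρ * signedData X i k ^ 2))).const_mul (n : ℝ)⁻¹).neg
  refine tendsto_nhds_unique hcoord ((hexponent.rexp.mul_const (w 0 k)).congr' ?_)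
  filter_upwards [eventually_ge_atTop 0] with t ht
  rw [hw.apply_eq_exp_integral_mul k ht, hw.integral_oneSamLogRate k ht]

theorem betaOf_limit (hw : IsOneSamFlow X y ρ w) {α α' : Fin d → ℝ}
    (hinit : ∀ j, w 0 (Sum.inl j) = α j ∧ w 0 (Sum.inr j) = α j)
    (hI : ∀ i, HasImproperIntegral (fun s => resid X y (oneSamAscent X y ρ w i s) i) (I i))
    (hJ : ∀ i, HasImproperIntegral
      (fun s => resid X y (oneSamAscent X y ρ w i s) i * resid X y (w s) i) (J i))
    (hconv : Tendsto w atTop (𝓝 winf))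
    (hα'sq : ∀ j, α' j ^ 2 = α j ^ 2 * Real.exp (-(2 * ρ / n) * ∑ i, X i j ^ 2 * J i)) (j : Fin d) :
    betaOf winf j = α' j ^ 2 * (2 * Real.sinh (((-(2 / n : ℝ) • I) ᵥ* X) j)) := by
  set U := ((-(2 / n : ℝ) • I) ᵥ* X) j with hU
  have hsq (k : Fin d ⊕ Fin d) (σ : ℝ) (hσ : σ ^ 2 = 1) (hk : w 0 k = α j)
      (hξ : ∀ i, signedData X i k = σ * X i j) : winf k ^ 2 = α' j ^ 2 * Real.exp (σ * U) := by
    rw [hw.limit_apply hI hJ hconv, hk, hα'sq, mul_pow, mul_comm, ← Real.exp_nat_mul, mul_assoc,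
      ← Real.exp_add]
    simp only [hξ, mul_pow, hσ, hU, vecMul, dotProduct, Pi.smul_apply, smul_eq_mul,
      Finset.mul_sum, ← Finset.sum_neg_distrib, ← Finset.sum_add_distrib]
    congr! 3 with i
    push_cast
    ring
  have hplus := hsq (Sum.inl j) 1 (one_pow 2) (hinit j).1 (by simp [signedData])
  have hminus := hsq (Sum.inr j) (-1) neg_one_sq (hinit j).2 (by simp [signedData])
  rw [betaOf, hplus, hminus, Real.sinh_eq, one_mul, neg_one_mul]
  ring

end IsOneSamFlow

end Flow

theorem onesam_implicit_bias_diagonal_network_general {d n : ℕ}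
    {X : Matrix (Fin n) (Fin d) ℝ} {y : Fin n → ℝ} {ρ : ℝ} {α : Fin d → ℝ}
    {w : ℝ → EuclideanSpace ℝ (Fin d ⊕ Fin d)} (hflow : IsOneSamFlow X y ρ w)
    (hinit : ∀ j, w 0 (Sum.inl j) = α j ∧ w 0 (Sum.inr j) = α j) {I J : Fin n → ℝ}
    (hI : ∀ i, HasImproperIntegral (fun s => resid X y (oneSamAscent X y ρ w i s) i) (I i))
    (hJ : ∀ i, HasImproperIntegral
      (fun s => resid X y (oneSamAscent X y ρ w i s) i * resid X y (w s) i) (J i))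
    {winf : EuclideanSpace ℝ (Fin d ⊕ Fin d)} (hconv : Tendsto w atTop (𝓝 winf))
    {α' : Fin d → ℝ} (hα'pos : ∀ j, 0 < α' j)
    (hα'sq : ∀ j, α' j ^ 2 = α j ^ 2 * Real.exp (-(2 * ρ / n) * ∑ i, X i j ^ 2 * J i))
    {b : Fin d → ℝ} (hb : X *ᵥ b = X *ᵥ betaOf winf) :
    hypEntropy α' (betaOf winf) ≤ hypEntropy α' b :=
  hypEntropy_le_of_mulVec_eq (fun j => (hα'pos j).ne')
    (hflow.betaOf_limit hinit hI hJ hconv hα'sq) hb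

/-- Implicit bias of the full-batch 1-SAM gradient flow for diagonal
linear networks: if the flow `w′(t) = −(1/n)∑ᵢ ∇ℓᵢ(w(t) + ρ∇ℓᵢ(w(t)))` started at
`w(0) = (α, α)` converges to `w_∞` with interpolating predictor `β_∞ = β(w_∞)` (`Xβ_∞ = y`),
and the stated improper integrals converge, then `β_∞` minimizes `φ_{α′}` over `{β : Xβ = y}`,
where `(α′ⱼ)² = αⱼ²·exp(−(2ρ/n)·∑ᵢ xᵢⱼ²·∫₀^∞ r_{sam,i}(s) rᵢ(s) ds)`. -/
theorem onesam_implicit_bias_diagonal_network {d n : ℕ}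
    (X : Matrix (Fin n) (Fin d) ℝ) (y : Fin n → ℝ)
    (ρ : ℝ) (hρ : 0 ≤ ρ) (α : Fin d → ℝ) (hα : ∀ j, 0 < α j)
    (w : ℝ → EuclideanSpace ℝ (Fin d ⊕ Fin d))
    (hflow : ∀ t ∈ Set.Ici (0 : ℝ), HasDerivWithinAt w
      (-((n : ℝ)⁻¹ • ∑ i, gradient (exLoss X y i) (oneSamAscent X y ρ w i t)))
      (Set.Ici 0) t)
    (hinit : ∀ j, w 0 (Sum.inl j) = α j ∧ w 0 (Sum.inr j) = α j)
    (hint1 : ∀ i : Fin n, MeasureTheory.IntegrableOn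
      (fun s => resid X y (oneSamAscent X y ρ w i s) i) (Set.Ioi 0))
    (hint2 : ∀ i : Fin n, MeasureTheory.IntegrableOn
      (fun s => resid X y (oneSamAscent X y ρ w i s) i * resid X y (w s) i) (Set.Ioi 0))
    (winf : EuclideanSpace ℝ (Fin d ⊕ Fin d))
    (hconv : Filter.Tendsto w Filter.atTop (nhds winf))
    (hinterp : ∀ i, ∑ j, X i j * betaOf winf j = y i)
    (α' : Fin d → ℝ) (hα'pos : ∀ j, 0 < α' j)
    (hα' : ∀ j, α' j ^ 2 = α j ^ 2 * Real.exp (-(2 * ρ / n) *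
      ∑ i, X i j ^ 2 *
        ∫ s in Set.Ioi (0 : ℝ), resid X y (oneSamAscent X y ρ w i s) i * resid X y (w s) i)) :
    ∀ β' : Fin d → ℝ, (∀ i, ∑ j, X i j * β' j = y i) →
      hypEntropy α' (betaOf winf) ≤ hypEntropy α' β' := fun _ hβ' =>
  onesam_implicit_bias_diagonal_network_general hflow hinit
    (fun i => hasImproperIntegral_of_integrableOn (hint1 i))
    (fun i => hasImproperIntegral_of_integrableOn (hint2 i))
    hconv hα'pos hα' (funext fun i => (hβ' i).trans (hinterp i).symm)
end
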